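/- arXiv:1608.00510 — 3 statements merged into one kernel-verified Lean document; each statement's English description precedes it below -/
import Mathlib

section
/- Let F be a field, n ≥ 1, and let g be an element of the symplectic group Sp(2n, F) which, as a matrix, is monomial and whose permutation σ is a (2n)-cycle on the 2n indices. Then g^{2n} = −1. Moreover, if char F ≠ 2, the order of g equals 4n, while σ has order 2n. -/
open Matrix

/-- A matrix is monomial with permutation `σ` if its nonzero entries are exactly the
entries `(σ j, j)`, each of which is a unit. -/
def IsMonomial {n : Type*} [Fintype n] [DecidableEq n] {F : Type*} [Field F]
    (g : Matrix n n F) (σ : Equiv.Perm n) : Prop :=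
  ∃ c : n → Fˣ, ∀ i j, g i j = if i = σ j then (c j : F) else 0

section Cycle

variable {ι : Type*} [Fintype ι] {σ : Equiv.Perm ι}

theorem Equiv.Perm.IsCycleOn.pow_apply_eq_self_iff (hσ : σ.IsCycleOn _root_.Set.univ) (j : ι) {k : ℕ} :
    (σ ^ k) j = j ↔ Fintype.card ι ∣ k := by
  rw [← Finset.coe_univ] at hσ
  exact hσ.pow_apply_eq (Finset.mem_univ j)

theorem Equiv.Perm.IsCycleOn.orderOf_eq_card [Nonempty ι] (hσ : σ.IsCycleOn _root_.Set.univ) :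
    orderOf σ = Fintype.card ι := by
  refine Nat.dvd_antisymm (orderOf_dvd_of_pow_eq_one ?_) ?_
  · ext j
    exact (hσ.pow_apply_eq_self_iff j).2 dvd_rfl
  · rw [← hσ.pow_apply_eq_self_iff (Classical.arbitrary ι), pow_orderOf_eq_one,
      Equiv.Perm.one_apply]

theorem Equiv.Perm.IsCycleOn.sign_eq [DecidableEq ι] [Nontrivial ι]
    (hσ : σ.IsCycleOn _root_.Set.univ) : σ.sign = -(-1) ^ Fintype.card ι := by
  have hcycle : σ.IsCycle :=
    isCycle_iff_exists_isCycleOn.2 ⟨_root_.Set.univ, Set.nontrivial_univ, hσ, fun _ _ => Set.mem_univ _⟩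
  rw [hcycle.sign, ← hcycle.orderOf, hσ.orderOf_eq_card]

theorem Equiv.Perm.IsCycleOn.prod_range_pow_apply {M : Type*} [CommMonoid M]
    (hσ : σ.IsCycleOn _root_.Set.univ) (f : ι → M) (j : ι) :
    ∏ t ∈ Finset.range (Fintype.card ι), f ((σ ^ t) j) = ∏ i, f i := by
  rw [← Finset.coe_univ] at hσ
  refine Finset.prod_nbij (fun t => (σ ^ t) j) (fun _ _ => Finset.mem_univ _) ?_ ?_
    fun _ _ => rfl
  · intro a ha b hb hab
    simp only [Finset.coe_range, Set.mem_Iio] at ha hb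
    exact Nat.ModEq.eq_of_lt_of_lt ((hσ.pow_apply_eq_pow_apply (Finset.mem_univ j)).1 hab) ha hb
  · intro i _
    obtain ⟨k, hk, rfl⟩ := hσ.exists_pow_eq (Finset.mem_univ j) (Finset.mem_univ i)
    exact ⟨k, by simpa using hk, rfl⟩

end Cycle

section Monomial

variable {ι F : Type*} [Fintype ι] [DecidableEq ι] [CommRing F] {g : Matrix ι ι F}
  {σ : Equiv.Perm ι} {c : ι → F}

theorem Matrix.pow_apply_of_monomial (hg : ∀ i j, g i j = if i = σ j then c j else 0) (k : ℕ)
    (i j : ι) :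
    (g ^ k) i j = if i = (σ ^ k) j then ∏ t ∈ Finset.range k, c ((σ ^ t) j) else 0 := by
  induction k generalizing i with
  | zero => simp [Matrix.one_apply]
  | succ k ih =>
    simp [pow_succ', Matrix.mul_apply, ih, hg, Finset.prod_range_succ, mul_comm]

theorem Matrix.det_of_monomial (hg : ∀ i j, g i j = if i = σ j then c j else 0) :
    σ.sign * g.det = ∏ j, c j := by
  rw [← Matrix.det_permute, ← Matrix.det_diagonal]
  congr 1
  ext i j
  by_cases h : i = j <;> simp [hg, h]

theorem Matrix.pow_card_of_monomial (hg : ∀ i j, g i j = if i = σ j then c j else 0)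
    (hσ : σ.IsCycleOn Set.univ) :
    g ^ Fintype.card ι = (σ.sign * g.det : F) • (1 : Matrix ι ι F) := by
  ext i j
  rw [pow_apply_of_monomial hg, (hσ.pow_apply_eq_self_iff j).2 dvd_rfl,
    hσ.prod_range_pow_apply c, det_of_monomial hg]
  simp [Matrix.one_apply]

end Monomial

/-- A monomial symplectic matrix whose permutation is a `2n`-cycle satisfies
`g ^ (2n) = -1`; if `char F ≠ 2` then `g` has order `4n` while `σ` has order `2n`. -/
theorem stmt_6 (F : Type*) [Field F] (n : ℕ) (hn : 1 ≤ n)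
    (g : Matrix.symplecticGroup (Fin n) F) (σ : Equiv.Perm (Fin n ⊕ Fin n))
    (hmon : IsMonomial (g : Matrix (Fin n ⊕ Fin n) (Fin n ⊕ Fin n) F) σ)
    (hcyc : σ.IsCycleOn Set.univ) :
    (↑(g ^ (2 * n)) : Matrix (Fin n ⊕ Fin n) (Fin n ⊕ Fin n) F) = -1 ∧
      (ringChar F ≠ 2 → orderOf g = 4 * n ∧ orderOf σ = 2 * n) := by
  obtain ⟨c, hg⟩ := hmon
  have hcard : Fintype.card (Fin n ⊕ Fin n) = 2 * n := by simp [two_mul]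
  have : Nontrivial (Fin n ⊕ Fin n) := Fintype.one_lt_card_iff_nontrivial.1 (by omega)
  have hpow : (↑(g ^ (2 * n)) : Matrix (Fin n ⊕ Fin n) (Fin n ⊕ Fin n) F) = -1 := by
    rw [SubmonoidClass.coe_pow, ← hcard, Matrix.pow_card_of_monomial hg hcyc,
      SymplecticGroup.det_eq_one g.2, hcyc.sign_eq, hcard]
    simp
  refine ⟨hpow, fun hchar => ⟨?_, hcyc.orderOf_eq_card.trans hcard⟩⟩
  obtain ⟨j⟩ : Nonempty (Fin n ⊕ Fin n) := inferInstance
  have hdvd : 2 * n ∣ orderOf g := by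
    rw [← hcard, ← hcyc.pow_apply_eq_self_iff j]
    by_contra hne
    have hentry := Matrix.pow_apply_of_monomial hg (orderOf g) j j
    rw [if_neg (Ne.symm hne), ← SubmonoidClass.coe_pow, pow_orderOf_eq_one] at hentry
    simp at hentry
  obtain ⟨k, hk⟩ := hdvd
  have hk_dvd : k ∣ 2 := by
    have : orderOf g ∣ 2 * n * 2 := by
      refine orderOf_dvd_of_pow_eq_one (Subtype.ext ?_)
      rw [pow_mul, SubmonoidClass.coe_pow, hpow]
      simp
    rw [hk] at this
    exact Nat.dvd_of_mul_dvd_mul_left (by omega) this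
  have hk_ne : k ≠ 1 := by
    rintro rfl
    rw [mul_one] at hk
    have hone := congrFun₂ hpow j j
    rw [← hk, pow_orderOf_eq_one] at hone
    simp only [OneMemClass.coe_one, Matrix.one_apply_eq, Matrix.neg_apply] at hone
    exact Ring.neg_one_ne_one_of_char_ne_two hchar hone.symm
  rw [hk, ((Nat.dvd_prime Nat.prime_two).1 hk_dvd).resolve_left hk_ne]
  ring
end

section
/- Let F be a field, m ≥ 2, and S the m × m antidiagonal matrix over F (entries S i j = 1 if i + j = m − 1 and 0 otherwise, with indices 0, …, m − 1). Let g ∈ GL(m, F) be a monomial matrix with gᵀ * S * g = S, let σ be its permutation, and suppose every orbit of σ on the index set {0, …, m − 1} is invariant under the involution τ : i ↦ m − 1 − i. Then g^{k} = 1, where k is the order of the permutation σ. -/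
open Matrix

/-- The `m × m` antidiagonal matrix, the Gram matrix of the split symmetric form. -/
def antidiagMat (m : ℕ) (F : Type*) [Field F] : Matrix (Fin m) (Fin m) F :=
  Matrix.of fun i j => if (i : ℕ) + (j : ℕ) = m - 1 then 1 else 0

/-- The product of `c` along the first `k` points of the `f`-orbit of `x`. -/
def orbitProd {ι M : Type*} [CommMonoid M] (f : ι → ι) (c : ι → M) (k : ℕ) (x : ι) : M :=
  ∏ i ∈ Finset.range k, c (f^[i] x)

section OrbitProd

variable {ι M : Type*} [CommMonoid M] {f t : ι → ι} {c : ι → M} {x : ι}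

lemma orbitProd_succ (k : ℕ) : orbitProd f c (k + 1) x = orbitProd f c k x * c (f^[k] x) :=
  Finset.prod_range_succ _ _

lemma orbitProd_add (k l : ℕ) :
    orbitProd f c (k + l) x = orbitProd f c k x * orbitProd f c l (f^[k] x) := by
  simp only [orbitProd, Finset.prod_range_add, ← Function.iterate_add_apply, add_comm]

lemma orbitProd_mul_eq_one {p : ℕ} (hp : Function.IsPeriodicPt f p x)
    (h : orbitProd f c p x = 1) (q : ℕ) : orbitProd f c (p * q) x = 1 := by
  induction q with
  | zero => simp [orbitProd]
  | succ q ih => rw [Nat.mul_succ, orbitProd_add, ih, one_mul, (hp.mul_const q).eq, h]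

/-- If an involution commuting with `f` moves `x` within its orbit, then it does so by half
the period of `x`. -/
lemma exists_two_mul_eq_minimalPeriod (ht : Function.Involutive t) (hft : Function.Commute f t)
    (hx : x ∈ Function.periodicPts f) (hne : t x ≠ x) (horb : ∃ n, f^[n] x = t x) :
    ∃ h, f^[h] x = t x ∧ 2 * h = Function.minimalPeriod f x := by
  obtain ⟨n, hn⟩ := horb
  have hpos := Function.minimalPeriod_pos_of_mem_periodicPts hx
  set h := n % Function.minimalPeriod f x
  have hh : f^[h] x = t x := by rw [Function.iterate_mod_minimalPeriod_eq, hn]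
  have hlt : h < Function.minimalPeriod f x := Nat.mod_lt _ hpos
  have h0 : h ≠ 0 := fun h0 => hne (by rw [← hh, h0, Function.iterate_zero_apply])
  have hper : Function.IsPeriodicPt f (2 * h) x := by
    change f^[2 * h] x = x
    rw [two_mul, Function.iterate_add_apply, hh, (hft.iterate_left h).eq, hh, ht x]
  obtain ⟨q, hq⟩ := hper.minimalPeriod_dvd
  refine ⟨h, hh, ?_⟩
  have hq1 : q = 1 := by
    have : q < 2 := by
      by_contra! hq2
      have := Nat.mul_le_mul_left (Function.minimalPeriod f x) hq2
      omega
    interval_cases q <;> omega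
  rw [hq, hq1, mul_one]

lemma orbitProd_two_mul_eq_one (hft : Function.Commute f t) (hc : ∀ y, c y * c (t y) = 1)
    {h : ℕ} (hh : f^[h] x = t x) : orbitProd f c (2 * h) x = 1 := by
  rw [two_mul, orbitProd_add, hh, orbitProd, orbitProd, ← Finset.prod_mul_distrib]
  exact Finset.prod_eq_one fun i _ => by rw [(hft.iterate_left i).eq, hc]

/-- Let `t` be an involution, not the identity, commuting with `f` and preserving all
`f`-orbits, whose fixed points are also fixed by `f`. If `c y * c (t y) = 1` for all `y`,
then the product of `c` along `k` steps is trivial for every common period `k` of `f`. -/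
lemma orbitProd_eq_one_of_involutive (ht : Function.Involutive t) (hft : Function.Commute f t)
    (hc : ∀ y, c y * c (t y) = 1) (horb : ∀ y, ∃ n, f^[n] y = t y) (hmove : ∃ y, t y ≠ y)
    (hfixed : ∀ y, t y = y → f y = y)
    {k : ℕ} (hk : 0 < k) (hper : ∀ y, Function.IsPeriodicPt f k y) (x : ι) :
    orbitProd f c k x = 1 := by
  have key : ∀ y, t y ≠ y → ∃ h, f^[h] y = t y ∧ 2 * h = Function.minimalPeriod f y := fun y hy =>
    exists_two_mul_eq_minimalPeriod ht hft (Function.mk_mem_periodicPts hk (hper y)) hy (horb y)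
  by_cases hx : t x = x
  · obtain ⟨y, hy⟩ := hmove
    obtain ⟨h, -, hmin⟩ := key y hy
    obtain ⟨q, rfl⟩ : 2 ∣ k :=
      (Dvd.intro h hmin).trans (hper y).minimalPeriod_dvd
    have hfix : f x = x := hfixed x hx
    refine orbitProd_mul_eq_one (Function.IsFixedPt.isPeriodicPt hfix 2) ?_ q
    have := hc x
    rw [hx] at this
    simpa [orbitProd, Finset.prod_range_succ, hfix] using this
  · obtain ⟨h, hh, hmin⟩ := key x hx
    obtain ⟨q, rfl⟩ := (hper x).minimalPeriod_dvd
    rw [← hmin]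
    refine orbitProd_mul_eq_one ?_ (orbitProd_two_mul_eq_one hft hc hh) q
    rw [hmin]
    exact Function.isPeriodicPt_minimalPeriod f x

end OrbitProd

section Monomial

variable {n F : Type*} [Fintype n] [DecidableEq n] [Field F] {g : Matrix n n F}
  {σ : Equiv.Perm n} {c : n → Fˣ}

lemma monomial_pow_apply (hg : ∀ i j, g i j = if i = σ j then (c j : F) else 0) (k : ℕ) (i j : n) :
    (g ^ k) i j = if i = σ^[k] j then ((orbitProd σ c k j : Fˣ) : F) else 0 := by
  induction k generalizing i with
  | zero =>
    rw [pow_zero, Matrix.one_apply, orbitProd, Finset.prod_range_zero, Units.val_one]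
    rfl
  | succ k ih =>
    simp only [pow_succ', Matrix.mul_apply, ih, hg, orbitProd_succ,
      Function.iterate_succ_apply', Units.val_mul]
    simp [mul_comm]

lemma monomial_transpose_mul_mul_apply (hg : ∀ i j, g i j = if i = σ j then (c j : F) else 0)
    (S : Matrix n n F) (i j : n) : (gᵀ * S * g) i j = c i * S (σ i) (σ j) * c j := by
  simp [Matrix.mul_apply, hg]

end Monomial

lemma antidiagMat_apply {m : ℕ} {F : Type*} [Field F] (i j : Fin m) :
    antidiagMat m F i j = if j = i.rev then 1 else 0 := by
  simp only [antidiagMat, Matrix.of_apply, Fin.ext_iff, Fin.val_rev]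
  congr 1
  apply propext
  omega

/-- A monomial matrix preserving the split symmetric form, all of whose permutation
orbits are invariant under `i ↦ m - 1 - i`, satisfies `g ^ k = 1` where `k` is the
order of its permutation. -/
theorem stmt_9 (F : Type*) [Field F] (m : ℕ) (hm : 2 ≤ m)
    (g : GL (Fin m) F) (σ : Equiv.Perm (Fin m))
    (hmon : IsMonomial (g : Matrix (Fin m) (Fin m) F) σ)
    (hS : (g : Matrix (Fin m) (Fin m) F)ᵀ * antidiagMat m F * (g : Matrix (Fin m) (Fin m) F) =
      antidiagMat m F)
    (hτ : ∀ i : Fin m, σ.SameCycle i i.rev) :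
    g ^ orderOf σ = 1 := by
  obtain ⟨c, hg⟩ := hmon
  have hform (i : Fin m) : σ i.rev = (σ i).rev ∧ c i * c i.rev = 1 := by
    have h := congrFun (congrFun hS i) i.rev
    rw [monomial_transpose_mul_mul_apply hg, antidiagMat_apply, antidiagMat_apply,
      if_pos rfl] at h
    split_ifs at h with hi
    · exact ⟨hi, Units.ext (by simpa using h)⟩
    · simp at h
  have horb (i : Fin m) : ∃ k, σ^[k] i = i.rev := by
    obtain ⟨k, hk⟩ := (hτ i).exists_nat_pow_eq
    exact ⟨k, by rw [Equiv.Perm.iterate_eq_pow, hk]⟩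
  have hmove : ∃ i : Fin m, i.rev ≠ i :=
    ⟨⟨0, by omega⟩, by simp only [ne_eq, Fin.ext_iff, Fin.val_rev]; omega⟩
  have hfixed (i : Fin m) (hi : i.rev = i) : σ i = i := by
    have h := (hform i).1
    rw [hi] at h
    simp only [Fin.ext_iff, Fin.val_rev] at h hi ⊢
    omega
  have hper (i : Fin m) : σ^[orderOf σ] i = i := by
    rw [Equiv.Perm.iterate_eq_pow, pow_orderOf_eq_one, Equiv.Perm.one_apply]
  apply Units.ext
  ext i j
  rw [Units.val_pow_eq_pow_val, monomial_pow_apply hg, hper,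
    orbitProd_eq_one_of_involutive Fin.rev_involutive (fun i => (hform i).1)
      (fun i => (hform i).2) horb hmove hfixed (orderOf_pos σ) hper j]
  simp [Matrix.one_apply]
end

section
/- Let F be a field with char F ≠ 2 and n ≥ 1. Let g ∈ Sp(2n, F) be a monomial matrix with permutation σ, and suppose every orbit of σ on the 2n indices is invariant under the involution τ exchanging i and i + n (indices mod 2n). Let k be the order of σ. Then g^{k} is a scalar matrix (necessarily equal to 1 or −1) if and only if the cardinalities of all orbits of σ have the same 2-adic valuation. -/
open Matrix

namespace IsMonomial

variable {ι : Type*} [Fintype ι] [DecidableEq ι] {F : Type*} [Field F]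

theorem apply_eq_zero {A : Matrix ι ι F} {σ : Equiv.Perm ι} (hA : IsMonomial A σ) {i j : ι}
    (h : i ≠ σ j) : A i j = 0 := by
  obtain ⟨c, hc⟩ := hA
  simp [hc, h]

theorem mul_apply {A : Matrix ι ι F} {σ : Equiv.Perm ι} (hA : IsMonomial A σ)
    (B : Matrix ι ι F) (i j : ι) : (B * A) i j = B i (σ j) * A (σ j) j := by
  rw [Matrix.mul_apply]
  refine Finset.sum_eq_single _ (fun k _ hk => ?_) (by simp)
  rw [hA.apply_eq_zero hk, mul_zero]

theorem one : IsMonomial (1 : Matrix ι ι F) 1 :=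
  ⟨1, fun i j => by by_cases h : i = j <;> simp [Matrix.one_apply, h]⟩

theorem mul {A B : Matrix ι ι F} {σ π : Equiv.Perm ι} (hA : IsMonomial A σ)
    (hB : IsMonomial B π) : IsMonomial (A * B) (σ * π) := by
  have hmul := hB.mul_apply A
  obtain ⟨a, ha⟩ := hA
  obtain ⟨b, hb⟩ := hB
  refine ⟨fun j => a (π j) * b j, fun i j => ?_⟩
  rw [hmul, ha, hb]
  by_cases h : i = σ (π j) <;> simp [h]

theorem pow {A : Matrix ι ι F} {σ : Equiv.Perm ι} (hA : IsMonomial A σ) (k : ℕ) :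
    IsMonomial (A ^ k) (σ ^ k) := by
  induction k with
  | zero => simpa using one
  | succ k ih => simpa only [pow_succ] using ih.mul hA

/-- The diagonal entry of a power of a monomial matrix at a fixed point is the power of the
diagonal entry. -/
theorem pow_apply_self {A : Matrix ι ι F} {σ : Equiv.Perm ι} (hA : IsMonomial A σ) {i : ι}
    (hi : σ i = i) (q : ℕ) : (A ^ q) i i = A i i ^ q := by
  induction q with
  | zero => simp
  | succ q ih => rw [pow_succ, hA.mul_apply, hi, ih, pow_succ]

end IsMonomial

section Symplectic

variable {l : Type*} [DecidableEq l] {F : Type*} [Field F]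

theorem J_apply_eq_zero {i j : l ⊕ l} (h : j ≠ Equiv.sumComm l l i) : J l F i j = 0 := by
  rcases i with i | i <;> rcases j with j | j <;> simp_all [J, eq_comm]

theorem J_apply_swap_ne_zero (i : l ⊕ l) : J l F i (Equiv.sumComm l l i) ≠ 0 := by
  rcases i with i | i <;> simp [J]

theorem J_apply_comm (i j : l ⊕ l) : J l F j i = -J l F i j := by
  have := congrFun (congrFun (J_transpose l F) i) j
  simpa using this

variable [Fintype l]

/-- A monomial symplectic matrix preserves the symplectic form on pairs of standard basis
vectors. -/
theorem IsMonomial.mul_J_mul {A : Matrix (l ⊕ l) (l ⊕ l) F} {σ : Equiv.Perm (l ⊕ l)}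
    (hA : IsMonomial A σ) (hsp : A ∈ symplecticGroup l F) (i j : l ⊕ l) :
    A (σ i) i * J l F (σ i) (σ j) * A (σ j) j = J l F i j := by
  have h := congrFun (congrFun (SymplecticGroup.mem_iff'.1 hsp) i) j
  rw [← h, hA.mul_apply, ← Matrix.transpose_apply (Aᵀ * J l F), Matrix.transpose_mul,
    Matrix.transpose_transpose, hA.mul_apply, Matrix.transpose_apply]
  ring

theorem IsMonomial.apply_swap {A : Matrix (l ⊕ l) (l ⊕ l) F} {σ : Equiv.Perm (l ⊕ l)}
    (hA : IsMonomial A σ) (hsp : A ∈ symplecticGroup l F) (i : l ⊕ l) :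
    σ (Equiv.sumComm l l i) = Equiv.sumComm l l (σ i) := by
  by_contra hne
  have h := hA.mul_J_mul hsp i (Equiv.sumComm l l i)
  rw [J_apply_eq_zero hne, mul_zero, zero_mul] at h
  exact J_apply_swap_ne_zero i h.symm

/-- If a monomial symplectic matrix exchanges the lines spanned by the members of a hyperbolic
pair, then its square acts on them by `-1`. -/
theorem IsMonomial.sq_apply_self {A : Matrix (l ⊕ l) (l ⊕ l) F} {σ : Equiv.Perm (l ⊕ l)}
    (hA : IsMonomial A σ) (hsp : A ∈ symplecticGroup l F) {i : l ⊕ l}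
    (hi : σ i = Equiv.sumComm l l i) : (A ^ 2) i i = -1 := by
  have hi' : σ (Equiv.sumComm l l i) = i := by
    rw [hA.apply_swap hsp, hi]
    cases i <;> rfl
  have h := hA.mul_J_mul hsp i (Equiv.sumComm l l i)
  rw [hi', hi, J_apply_comm i] at h
  rw [pow_two, hA.mul_apply, hi]
  apply mul_right_cancel₀ (J_apply_swap_ne_zero (F := F) i)
  linear_combination -h

end Symplectic

theorem Equiv.Perm.pow_apply_eq_self_iff_minimalPeriod_dvd {α : Type*} (σ : Equiv.Perm α)
    (k : ℕ) (i : α) : (σ ^ k) i = i ↔ Function.minimalPeriod σ i ∣ k := by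
  rw [← Function.isPeriodicPt_iff_minimalPeriod_dvd, Function.IsPeriodicPt,
    Function.IsFixedPt, Equiv.Perm.iterate_eq_pow]

/-- If an involution without fixed points commutes with `σ` and preserves the cycle of `i`, then
it acts on that cycle as the half-period power of `σ`. -/
theorem Equiv.Perm.exists_minimalPeriod_eq_two_mul {α : Type*} [Finite α] {σ : Equiv.Perm α}
    {τ : α → α} (hcomm : ∀ i, σ (τ i) = τ (σ i)) (hinv : ∀ i, τ (τ i) = i) {i : α}
    (hne : τ i ≠ i) (hcyc : σ.SameCycle i (τ i)) :
    ∃ b, Function.minimalPeriod σ i = 2 * b ∧ (σ ^ b) i = τ i := by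
  obtain ⟨a, ha⟩ := hcyc.exists_nat_pow_eq
  have hpow : ∀ k j, (σ ^ k) (τ j) = τ ((σ ^ k) j) := by
    intro k
    induction k with
    | zero => simp
    | succ k ih => intro j; rw [pow_succ, Equiv.Perm.mul_apply, hcomm, ih, Equiv.Perm.mul_apply]
  have h2a : Function.minimalPeriod σ i ∣ 2 * a := by
    rw [← pow_apply_eq_self_iff_minimalPeriod_dvd, two_mul, pow_add, Equiv.Perm.mul_apply, ha,
      hpow, ha, hinv]
  have hna : ¬ Function.minimalPeriod σ i ∣ a := by
    rwa [← pow_apply_eq_self_iff_minimalPeriod_dvd, ha]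
  obtain ⟨q, hq⟩ := h2a
  have hqodd : ¬ 2 ∣ q := by
    rintro ⟨r, rfl⟩
    exact hna ⟨r, by linarith⟩
  obtain ⟨b, hb⟩ : 2 ∣ Function.minimalPeriod σ i :=
    (Nat.prime_two.dvd_mul.1 ⟨a, hq.symm⟩).resolve_right hqodd
  refine ⟨b, hb, ?_⟩
  obtain ⟨r, rfl⟩ : Odd q := by rwa [← Nat.not_even_iff_odd, even_iff_two_dvd]
  have hab : a = b + 2 * b * r := by rw [hb] at hq; linarith
  rw [← ha, hab, pow_add, Equiv.Perm.mul_apply,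
    (pow_apply_eq_self_iff_minimalPeriod_dvd σ (2 * b * r) i).2 (hb ▸ dvd_mul_right _ r)]

theorem Nat.odd_iff_padicValNat_mul_eq {m q : ℕ} (hm : m ≠ 0) (hq : q ≠ 0) :
    Odd q ↔ padicValNat 2 m = padicValNat 2 (m * q) := by
  rw [padicValNat.mul hm hq, left_eq_add, padicValNat.eq_zero_iff, ← Nat.not_even_iff_odd,
    even_iff_two_dvd]
  simp [hq]

theorem Equiv.Perm.minimalPeriod_dvd_orderOf {α : Type*} (σ : Equiv.Perm α) (i : α) :
    Function.minimalPeriod σ i ∣ orderOf σ := by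
  rw [← pow_apply_eq_self_iff_minimalPeriod_dvd, pow_orderOf_eq_one, Equiv.Perm.one_apply]

/-- Some cycle length of `σ` has odd index in the order of `σ`. -/
theorem Equiv.Perm.exists_odd_orderOf_eq_mul {α : Type*} [Finite α] [Nonempty α]
    (σ : Equiv.Perm α) : ∃ i q, Odd q ∧ orderOf σ = Function.minimalPeriod σ i * q := by
  by_contra! hall
  have hpos := orderOf_pos σ
  have heven : ∀ i, ∃ r, orderOf σ = 2 * (Function.minimalPeriod σ i * r) := by
    intro i
    obtain ⟨q, hq⟩ := σ.minimalPeriod_dvd_orderOf i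
    obtain ⟨r, rfl⟩ := Nat.not_odd_iff_even.1 fun h => hall i q h hq
    exact ⟨r, by rw [hq]; ring⟩
  have hhalf : σ ^ (orderOf σ / 2) = 1 := by
    ext i
    obtain ⟨r, hr⟩ := heven i
    rw [Equiv.Perm.one_apply, pow_apply_eq_self_iff_minimalPeriod_dvd]
    exact ⟨r, by omega⟩
  obtain ⟨r, hr⟩ := heven (Classical.arbitrary α)
  have := Nat.le_of_dvd (by omega) (orderOf_dvd_of_pow_eq_one hhalf)
  omega

/-- On a cycle preserved by the swap of the two blocks, a monomial symplectic matrix raised to the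
cycle length acts as `-1`. -/
theorem IsMonomial.pow_minimalPeriod_mul_apply_self {l : Type*} [Fintype l] [DecidableEq l]
    {F : Type*} [Field F] {A : Matrix (l ⊕ l) (l ⊕ l) F} {σ : Equiv.Perm (l ⊕ l)}
    (hA : IsMonomial A σ) (hsp : A ∈ symplecticGroup l F) {i : l ⊕ l}
    (hcyc : σ.SameCycle i (Equiv.sumComm l l i)) (q : ℕ) :
    (A ^ (Function.minimalPeriod σ i * q)) i i = (-1) ^ q := by
  obtain ⟨b, hb, hbi⟩ := Equiv.Perm.exists_minimalPeriod_eq_two_mul (τ := Equiv.sumComm l l)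
    (hA.apply_swap hsp) (fun i => by cases i <;> rfl) (by cases i <;> simp) hcyc
  rw [pow_mul, (hA.pow _).pow_apply_self
    ((σ.pow_apply_eq_self_iff_minimalPeriod_dvd _ i).2 dvd_rfl), hb, mul_comm 2 b, pow_mul,
    (hA.pow b).sq_apply_self (pow_mem hsp b) hbi]

/-- If `char F ≠ 2` and `g ∈ Sp(2n,F)` is monomial with all permutation orbits invariant
under the swap of the two blocks, then `g ^ k` (`k` the order of the permutation `σ`) is a
scalar matrix if and only if the cardinalities of the orbits of `σ` (i.e. the minimal
periods of `σ` at the various indices) all have the same `2`-adic valuation. -/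
theorem stmt_11 (F : Type*) [Field F] (hF : ringChar F ≠ 2) (n : ℕ) (hn : 1 ≤ n)
    (g : Matrix.symplecticGroup (Fin n) F) (σ : Equiv.Perm (Fin n ⊕ Fin n))
    (hmon : IsMonomial (g : Matrix (Fin n ⊕ Fin n) (Fin n ⊕ Fin n) F) σ)
    (hτ : ∀ i : Fin n ⊕ Fin n, σ.SameCycle i (Equiv.sumComm (Fin n) (Fin n) i)) :
    (∃ c : F, (↑(g ^ orderOf σ) : Matrix (Fin n ⊕ Fin n) (Fin n ⊕ Fin n) F) = c • 1) ↔
      ∀ i j : Fin n ⊕ Fin n,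
        padicValNat 2 (Function.minimalPeriod (⇑σ) i) =
          padicValNat 2 (Function.minimalPeriod (⇑σ) j) := by
  have hne : (-1 : F) ≠ 1 := Ring.neg_one_ne_one_of_char_ne_two hF
  have : Nonempty (Fin n ⊕ Fin n) := ⟨Sum.inl ⟨0, hn⟩⟩
  have hodd : ∀ {i q}, orderOf σ = Function.minimalPeriod σ i * q →
      (Odd q ↔ padicValNat 2 (Function.minimalPeriod σ i) = padicValNat 2 (orderOf σ)) := by
    intro i q hq
    have hpos := orderOf_pos σ
    rw [hq] at hpos ⊢
    exact Nat.odd_iff_padicValNat_mul_eq (Nat.pos_of_mul_pos_right hpos).ne'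
      (Nat.pos_of_mul_pos_left hpos).ne'
  have hdiag : ∀ {i q}, orderOf σ = Function.minimalPeriod σ i * q →
      ((g : Matrix (Fin n ⊕ Fin n) (Fin n ⊕ Fin n) F) ^ orderOf σ) i i = (-1) ^ q :=
    fun {i q} hq => hq ▸ hmon.pow_minimalPeriod_mul_apply_self g.2 (hτ i) q
  obtain ⟨i₀, q₀, hq₀, hi₀⟩ := σ.exists_odd_orderOf_eq_mul
  rw [SubmonoidClass.coe_pow]
  constructor
  · rintro ⟨c, hc⟩
    have hval : ∀ i, padicValNat 2 (Function.minimalPeriod σ i) = padicValNat 2 (orderOf σ) := by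
      intro i
      obtain ⟨q, hq⟩ := σ.minimalPeriod_dvd_orderOf i
      rw [← hodd hq]
      by_contra heven
      have h := hdiag hq
      have h₀ := hdiag hi₀
      rw [(Nat.not_odd_iff_even.1 heven).neg_one_pow, hc] at h
      rw [hq₀.neg_one_pow, hc] at h₀
      simp only [Matrix.smul_apply, one_apply_eq] at h h₀
      exact hne (h₀.symm.trans h)
    intro i j
    rw [hval i, hval j]
  · intro hval
    refine ⟨-1, ?_⟩
    ext i j
    by_cases hij : i = j
    · subst hij
      obtain ⟨q, hq⟩ := σ.minimalPeriod_dvd_orderOf i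
      have hqodd := (hodd hq).2 ((hval i i₀).trans ((hodd hi₀).1 hq₀))
      simp [hdiag hq, hqodd.neg_one_pow]
    · rw [(hmon.pow _).apply_eq_zero (by simpa [pow_orderOf_eq_one] using hij)]
      simp [hij]
end
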